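/- arXiv:1008.1852 — 2 statements merged into one kernel-verified Lean document; each statement's English description precedes it below -/
import Mathlib

section
/- Let a, b, λ ≥ 0 and δ > 0 satisfy δ²λ < π². Then there exists a constant c > 0, depending only on a, b, λ, δ, with the following property: for all real numbers s₀ < s₁ with s₁ − s₀ ≤ δ and every smooth function α : ℝ² → ℝ satisfying (i) ∂ₜα(s,0) = 0 and ∂ₜα(s,1) = 0 for all s ∈ [s₀,s₁], (ii) Δα + λα + a ≥ 0 on [s₀,s₁] × [0,1], and (iii) α(s₀,t) ≤ b and α(s₁,t) ≤ b for all t ∈ [0,1], one has α(s,t) ≤ c for all (s,t) ∈ [s₀,s₁] × [0,1]. -/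
/-!
If `v` is a positive function of `s` alone with `v'' + λv + a < 0` that dominates `α` on the
vertical sides, then `α ≤ v`. Otherwise `K = max (α / v) > 1` is attained off the vertical sides, at
a point where `α - K v` has maximum `0`. There `Δα ≤ K v''`, because the Neumann condition makes the
second derivative test in `t` available even on the horizontal boundary. With `a ≥ 0`, which is no
loss since `a` may be replaced by `|a|`, this gives `Δα + λα + a ≤ K (v'' + λv + a) < 0`, a
contradiction. Such a `v` is a large multiple of `cos (k (s - m))`, where `√λ < k < π / δ` and `m`
is the midpoint of `[s₀, s₁]`.
-/

open Set

/-- The standard Laplacian `Δα = ∂²α/∂s² + ∂²α/∂t²` of a function `α : ℝ² → ℝ`. -/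
noncomputable def lapl (α : ℝ × ℝ → ℝ) (s t : ℝ) : ℝ :=
  deriv (deriv fun s' => α (s', t)) s + deriv (deriv fun t' => α (s, t')) t

/-- The partial derivative `∂ₜα` of `α : ℝ² → ℝ` in the second variable. -/
noncomputable def pderivT (α : ℝ × ℝ → ℝ) (s t : ℝ) : ℝ :=
  deriv (fun t' => α (s, t')) t

open Filter Topology

theorem deriv_deriv_nonpos_of_isLocalMaxOn_Ici {f : ℝ → ℝ} {x : ℝ}
    (hf : ContinuousWithinAt f (Ici x) x) (hmax : IsLocalMaxOn f (Ici x) x)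
    (hderiv : 0 ≤ deriv f x) : deriv (deriv f) x ≤ 0 := by
  by_contra! hpos
  have hdiff : DifferentiableAt ℝ (deriv f) x := differentiableAt_of_deriv_ne_zero hpos.ne'
  have hderiv_pos : ∀ᶠ z in 𝓝[>] x, 0 < deriv f z := by
    have hslope := (hasDerivAt_iff_tendsto_slope_left_right.1 hdiff.hasDerivAt).2
    filter_upwards [hslope.eventually_const_lt hpos, self_mem_nhdsWithin] with z hz hxz
    exact hderiv.trans_lt ((slope_pos_iff_of_le (le_of_lt hxz)).1 hz)
  have hle : ∀ᶠ z in 𝓝[>] x, f z ≤ f x := nhdsWithin_mono x Ioi_subset_Ici_self hmax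
  obtain ⟨y, hxy, hy⟩ := mem_nhdsGT_iff_exists_Ioc_subset.1 (hderiv_pos.and hle)
  have hcont : ContinuousOn f (Icc x y) := by
    intro z hz
    rcases hz.1.eq_or_lt with rfl | hxz
    · exact hf.mono Icc_subset_Ici_self
    · exact (differentiableAt_of_deriv_ne_zero
        (hy ⟨hxz, hz.2⟩).1.ne').continuousAt.continuousWithinAt
  have hmono : StrictMonoOn f (Icc x y) := by
    refine strictMonoOn_of_deriv_pos (convex_Icc x y) hcont fun z hz => ?_
    rw [interior_Icc] at hz
    exact (hy (Ioo_subset_Ioc_self hz)).1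
  have hlt : f x < f y := hmono (left_mem_Icc.2 (le_of_lt hxy)) (right_mem_Icc.2 (le_of_lt hxy)) hxy
  exact hlt.not_ge (hy ⟨hxy, le_rfl⟩).2

theorem deriv_deriv_nonpos_of_isLocalMaxOn_Iic {f : ℝ → ℝ} {x : ℝ}
    (hf : ContinuousWithinAt f (Iic x) x) (hmax : IsLocalMaxOn f (Iic x) x)
    (hderiv : deriv f x ≤ 0) : deriv (deriv f) x ≤ 0 := by
  have htendsto : Tendsto Neg.neg (𝓝[≥] (-x)) (𝓝[≤] x) := by
    simpa using tendsto_neg_nhdsGE (a := -x)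
  have hreflect : deriv (deriv fun z => f (-z)) (-x) = deriv (deriv f) x := by
    simpa [iteratedDeriv_succ] using iteratedDeriv_comp_neg 2 f (-x)
  rw [← hreflect]
  refine deriv_deriv_nonpos_of_isLocalMaxOn_Ici ?_ ?_ ?_
  · simpa [ContinuousWithinAt, Function.comp_def] using hf.tendsto.comp htendsto
  · simpa [IsLocalMaxOn, IsMaxFilter] using htendsto.eventually hmax
  · simpa [deriv_comp_neg] using hderiv

theorem deriv_deriv_nonpos_of_isLocalMax {f : ℝ → ℝ} {x : ℝ} (hf : ContinuousAt f x)
    (hmax : IsLocalMax f x) : deriv (deriv f) x ≤ 0 :=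
  deriv_deriv_nonpos_of_isLocalMaxOn_Ici hf.continuousWithinAt (hmax.on _) hmax.deriv_eq_zero.ge

theorem deriv_deriv_nonpos_of_isMaxOn_Icc {f : ℝ → ℝ} {x y z : ℝ} (hxy : x < y)
    (hf : ContinuousOn f (Icc x y)) (hz : z ∈ Icc x y) (hmax : IsMaxOn f (Icc x y) z)
    (hx : 0 ≤ deriv f x) (hy : deriv f y ≤ 0) : deriv (deriv f) z ≤ 0 := by
  rcases eq_endpoints_or_mem_Ioo_of_mem_Icc hz with rfl | rfl | hz'
  · have hnhds : Icc z y ∈ 𝓝[≥] z := Icc_mem_nhdsGE hxy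
    exact deriv_deriv_nonpos_of_isLocalMaxOn_Ici ((hf z hz).mono_of_mem_nhdsWithin hnhds)
      (eventually_of_mem hnhds hmax) hx
  · have hnhds : Icc x z ∈ 𝓝[≤] z := Icc_mem_nhdsLE hxy
    exact deriv_deriv_nonpos_of_isLocalMaxOn_Iic ((hf z hz).mono_of_mem_nhdsWithin hnhds)
      (eventually_of_mem hnhds hmax) hy
  · have hnhds : Icc x y ∈ 𝓝 z := Icc_mem_nhds hz'.1 hz'.2
    exact deriv_deriv_nonpos_of_isLocalMax (hf.continuousAt hnhds) (hmax.isLocalMax hnhds)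

section Strip

variable {α : ℝ × ℝ → ℝ} {v : ℝ → ℝ} {s₀ s₁ t₀ t₁ : ℝ}

theorem lapl_le_deriv_deriv_of_isMaxOn_sub {p q : ℝ} (hα : ContDiff ℝ 2 α) (hv : ContDiff ℝ 2 v)
    (ht : t₀ < t₁) (hp : p ∈ Ioo s₀ s₁) (hq : q ∈ Icc t₀ t₁)
    (hmax : IsMaxOn (fun z => α z - v z.1) (Icc s₀ s₁ ×ˢ Icc t₀ t₁) (p, q))
    (hneumann : 0 ≤ pderivT α p t₀ ∧ pderivT α p t₁ ≤ 0) :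
    lapl α p q ≤ deriv (deriv v) p := by
  have hαs : ContDiff ℝ 2 fun s => α (s, q) := by fun_prop
  have hss : deriv (deriv fun s => α (s, q) - v s) p ≤ 0 := by
    refine deriv_deriv_nonpos_of_isLocalMax (hαs.sub hv).continuous.continuousAt ?_
    filter_upwards [Icc_mem_nhds hp.1 hp.2] with s hs
    exact hmax (mk_mem_prod hs hq)
  have htt : deriv (deriv fun t => α (p, t)) q ≤ 0 := by
    have hαt : Continuous fun t => α (p, t) := hα.continuous.comp (by fun_prop)
    refine deriv_deriv_nonpos_of_isMaxOn_Icc ht hαt.continuousOn hq (fun t ht' => ?_)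
      hneumann.1 hneumann.2
    simpa using hmax (mk_mem_prod (Ioo_subset_Icc_self hp) ht')
  have hsub : deriv (deriv fun s => α (s, q) - v s) p =
      deriv (deriv fun s => α (s, q)) p - deriv (deriv v) p := by
    simpa [iteratedDeriv_succ] using
      iteratedDeriv_fun_sub (n := 2) (x := p) hαs.contDiffAt hv.contDiffAt
  unfold lapl
  linarith

theorem exists_isMaxOn_sub_mul (hα : Continuous α) (hv : Continuous v)
    (hv_pos : ∀ s ∈ Icc s₀ s₁, 0 < v s) (hs : s₀ ≤ s₁) (ht : t₀ ≤ t₁) :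
    ∃ K : ℝ, ∃ p ∈ Icc s₀ s₁, ∃ q ∈ Icc t₀ t₁, α (p, q) = K * v p ∧
      IsMaxOn (fun z => α z - K * v z.1) (Icc s₀ s₁ ×ˢ Icc t₀ t₁) (p, q) := by
  have hcont : ContinuousOn (fun z : ℝ × ℝ => α z / v z.1) (Icc s₀ s₁ ×ˢ Icc t₀ t₁) :=
    hα.continuousOn.div (hv.comp continuous_fst).continuousOn fun z hz => (hv_pos z.1 hz.1).ne'
  obtain ⟨⟨p, q⟩, ⟨hp, hq⟩, hmax⟩ := (isCompact_Icc.prod isCompact_Icc).exists_isMaxOn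
    ((nonempty_Icc.2 hs).prod (nonempty_Icc.2 ht)) hcont
  have htouch : α (p, q) = α (p, q) / v p * v p := (div_mul_cancel₀ _ (hv_pos p hp).ne').symm
  refine ⟨α (p, q) / v p, p, hp, q, hq, htouch, fun z hz => ?_⟩
  have hle : α z ≤ α (p, q) / v p * v z.1 := (div_le_iff₀ (hv_pos z.1 hz.1)).1 (hmax hz)
  simp only [mem_ofPred_eq]
  linarith

theorem le_of_strict_supersolution {a lam : ℝ} (ha : 0 ≤ a) (hα : ContDiff ℝ 2 α)
    (hv : ContDiff ℝ 2 v) (hv_pos : ∀ s ∈ Icc s₀ s₁, 0 < v s)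
    (hsuper : ∀ s ∈ Ioo s₀ s₁, deriv (deriv v) s + lam * v s + a < 0) (ht : t₀ < t₁)
    (hneumann : ∀ s ∈ Ioo s₀ s₁, 0 ≤ pderivT α s t₀ ∧ pderivT α s t₁ ≤ 0)
    (hsub : ∀ s ∈ Ioo s₀ s₁, ∀ t ∈ Icc t₀ t₁, 0 ≤ lapl α s t + lam * α (s, t) + a)
    (hside : ∀ t ∈ Icc t₀ t₁, α (s₀, t) ≤ v s₀ ∧ α (s₁, t) ≤ v s₁) :
    ∀ s ∈ Icc s₀ s₁, ∀ t ∈ Icc t₀ t₁, α (s, t) ≤ v s := by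
  intro s hs t ht'
  obtain ⟨K, p, hp, q, hq, htouch, hmax⟩ :=
    exists_isMaxOn_sub_mul hα.continuous hv.continuous hv_pos (hs.1.trans hs.2) ht.le
  have hαK : α (s, t) ≤ K * v s := by
    have hle := hmax (mk_mem_prod hs ht')
    simp only [mem_ofPred_eq] at hle
    linarith
  suffices hK : K ≤ 1 from hαK.trans (mul_le_of_le_one_left (hv_pos s hs).le hK)
  by_contra! hK
  have hlt : v p < α (p, q) := htouch ▸ lt_mul_of_one_lt_left (hv_pos p hp) hK
  have hp' : p ∈ Ioo s₀ s₁ := by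
    rcases eq_endpoints_or_mem_Ioo_of_mem_Icc hp with rfl | rfl | hp'
    · exact absurd (hside q hq).1 hlt.not_ge
    · exact absurd (hside q hq).2 hlt.not_ge
    · exact hp'
  have hlapl : lapl α p q ≤ K * deriv (deriv v) p := by
    simpa [iteratedDeriv_succ] using lapl_le_deriv_deriv_of_isMaxOn_sub hα
      (contDiff_const.mul hv) ht hp' hq hmax (hneumann p hp')
  have hneg : lapl α p q + lam * α (p, q) + a < 0 :=
    calc lapl α p q + lam * α (p, q) + a
        ≤ K * deriv (deriv v) p + lam * (K * v p) + K * a := by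
          rw [htouch]
          gcongr
          exact le_mul_of_one_le_left ha hK.le
      _ = K * (deriv (deriv v) p + lam * v p + a) := by ring
      _ < 0 := mul_neg_of_pos_of_neg (one_pos.trans hK) (hsuper p hp')
  exact hneg.not_ge (hsub p hp' q hq)

end Strip

theorem deriv_deriv_const_mul_cos (C k m s : ℝ) :
    deriv (deriv fun s => C * Real.cos (k * (s - m))) s =
      -k ^ 2 * (C * Real.cos (k * (s - m))) := by
  have hinner (s : ℝ) : HasDerivAt (fun s => k * (s - m)) k s := by
    simpa using ((hasDerivAt_id s).sub_const m).const_mul k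
  have hderiv : deriv (fun s => C * Real.cos (k * (s - m))) =
      fun s => C * (-Real.sin (k * (s - m)) * k) :=
    funext fun s => ((hinner s).cos.const_mul C).deriv
  rw [hderiv, (((hinner s).sin.fun_neg.mul_const k).const_mul C).deriv]
  ring

theorem cos_le_cos_mul_sub_midpoint {k δ s₀ s₁ s : ℝ} (hk : 0 ≤ k) (hkδ : k * δ ≤ 2 * Real.pi)
    (hδ : s₁ - s₀ ≤ δ) (hs : s ∈ Icc s₀ s₁) :
    Real.cos (k * δ / 2) ≤ Real.cos (k * (s - (s₀ + s₁) / 2)) := by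
  have hdist : |s - (s₀ + s₁) / 2| ≤ δ / 2 := by
    rw [abs_le]
    constructor <;> linarith [hs.1, hs.2]
  have harg : |k * (s - (s₀ + s₁) / 2)| ≤ k * δ / 2 := by
    rw [abs_mul, abs_of_nonneg hk, mul_div_assoc]
    gcongr
  rw [← Real.cos_abs (k * (s - _))]
  exact Real.cos_le_cos_of_nonneg_of_le_pi (abs_nonneg _) (by linarith) harg

theorem exists_strict_supersolution (a b : ℝ) {lam δ : ℝ} (hδ : 0 < δ)
    (hδlam : δ ^ 2 * lam < Real.pi ^ 2) :
    ∃ c : ℝ, 0 < c ∧ ∀ s₀ s₁ : ℝ, s₁ - s₀ ≤ δ → ∃ v : ℝ → ℝ, ContDiff ℝ 2 v ∧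
      ∀ s ∈ Icc s₀ s₁, 0 < v s ∧ b ≤ v s ∧ v s ≤ c ∧ deriv (deriv v) s + lam * v s + a < 0 := by
  -- For `lam < 0` the junk value `√lam = 0` is a suitable lower bound for `k`.
  obtain ⟨k, hlam_k, hk_lt⟩ : ∃ k, √lam < k ∧ k < Real.pi / δ := by
    refine exists_between ((Real.sqrt_lt' (by positivity)).2 ?_)
    rwa [div_pow, lt_div_iff₀' (by positivity)]
  have hk : 0 < k := (Real.sqrt_nonneg lam).trans_lt hlam_k
  have hgap : 0 < k ^ 2 - lam := sub_pos.2 (Real.lt_sq_of_sqrt_lt hlam_k)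
  have hkδ : k * δ < Real.pi := (lt_div_iff₀ hδ).1 hk_lt
  have hkδ_pos : 0 < k * δ := by positivity
  have hcos : 0 < Real.cos (k * δ / 2) :=
    Real.cos_pos_of_mem_Ioo ⟨by linarith, by linarith⟩
  obtain ⟨B, hB, hbB, haB⟩ : ∃ B : ℝ, 0 < B ∧ b ≤ B ∧ a < (k ^ 2 - lam) * B :=
    ((eventually_gt_atTop 0).and ((eventually_ge_atTop b).and
      ((tendsto_id.const_mul_atTop hgap).eventually_gt_atTop a))).exists
  set C := B / Real.cos (k * δ / 2)
  have hC : 0 < C := by positivity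
  refine ⟨C, hC, fun s₀ s₁ hs => ⟨fun s => C * Real.cos (k * (s - (s₀ + s₁) / 2)),
    by fun_prop, fun s hs' => ?_⟩⟩
  have hBv : B ≤ C * Real.cos (k * (s - (s₀ + s₁) / 2)) :=
    calc B = C * Real.cos (k * δ / 2) := (div_mul_cancel₀ B hcos.ne').symm
      _ ≤ _ := by
        gcongr
        exact cos_le_cos_mul_sub_midpoint hk.le (by linarith) hs hs'
  refine ⟨hB.trans_le hBv, hbB.trans hBv, mul_le_of_le_one_right hC.le (Real.cos_le_one _), ?_⟩
  rw [deriv_deriv_const_mul_cos]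
  linarith [mul_le_mul_of_nonneg_left hBv hgap.le]

theorem maximum_principle_strip_general (a b : ℝ) {lam δ : ℝ} (hδ : 0 < δ)
    (hδlam : δ ^ 2 * lam < Real.pi ^ 2) :
    ∃ c : ℝ, 0 < c ∧ ∀ (s₀ s₁ t₀ t₁ : ℝ) (α : ℝ × ℝ → ℝ),
      s₁ - s₀ ≤ δ → t₀ < t₁ → ContDiff ℝ 2 α →
      (∀ s ∈ Ioo s₀ s₁, 0 ≤ pderivT α s t₀ ∧ pderivT α s t₁ ≤ 0) →
      (∀ s ∈ Ioo s₀ s₁, ∀ t ∈ Icc t₀ t₁, 0 ≤ lapl α s t + lam * α (s, t) + a) →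
      (∀ t ∈ Icc t₀ t₁, α (s₀, t) ≤ b ∧ α (s₁, t) ≤ b) →
      ∀ s ∈ Icc s₀ s₁, ∀ t ∈ Icc t₀ t₁, α (s, t) ≤ c := by
  obtain ⟨c, hc, hsuper⟩ := exists_strict_supersolution |a| b hδ hδlam
  refine ⟨c, hc, fun s₀ s₁ t₀ t₁ α hs ht hα hneumann hsub hside s hs' t ht' => ?_⟩
  obtain ⟨v, hv, hbarrier⟩ := hsuper s₀ s₁ hs
  have hs₀₁ : s₀ ≤ s₁ := hs'.1.trans hs'.2
  refine (le_of_strict_supersolution (abs_nonneg a) hα hv (fun r hr => (hbarrier r hr).1)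
    (fun r hr => (hbarrier r (Ioo_subset_Icc_self hr)).2.2.2) ht hneumann
    (fun r hr u hu => (hsub r hr u hu).trans (by gcongr; exact le_abs_self a))
    (fun u hu => ⟨?_, ?_⟩) s hs' t ht').trans (hbarrier s hs').2.2.1
  · exact (hside u hu).1.trans (hbarrier s₀ (left_mem_Icc.2 hs₀₁)).2.1
  · exact (hside u hu).2.trans (hbarrier s₁ (right_mem_Icc.2 hs₀₁)).2.1

/-- **Maximum principle on a strip with Neumann boundary conditions** (Lemma 3.5).
If `δ²λ < π²` there is a constant `c = c(a,b,λ,δ)` bounding any smooth `α` on a strip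
`[s₀,s₁] × [0,1]` of width `≤ δ` which satisfies the Neumann condition `∂ₜα = 0` on
the horizontal boundary, the differential inequality `Δα + λα + a ≥ 0`, and `α ≤ b`
on the vertical boundary. -/
theorem maximum_principle_strip
    (a b lam δ : ℝ) (ha : 0 ≤ a) (hb : 0 ≤ b) (hlam : 0 ≤ lam) (hδ : 0 < δ)
    (hδlam : δ ^ 2 * lam < Real.pi ^ 2) :
    ∃ c : ℝ, 0 < c ∧ ∀ (s₀ s₁ : ℝ) (α : ℝ × ℝ → ℝ),
      s₀ < s₁ → s₁ - s₀ ≤ δ → ContDiff ℝ (⊤ : ℕ∞) α →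
      (∀ s ∈ Icc s₀ s₁, pderivT α s 0 = 0 ∧ pderivT α s 1 = 0) →
      (∀ s ∈ Icc s₀ s₁, ∀ t ∈ Icc (0:ℝ) 1, 0 ≤ lapl α s t + lam * α (s, t) + a) →
      (∀ t ∈ Icc (0:ℝ) 1, α (s₀, t) ≤ b ∧ α (s₁, t) ≤ b) →
      ∀ s ∈ Icc s₀ s₁, ∀ t ∈ Icc (0:ℝ) 1, α (s, t) ≤ c := by
  obtain ⟨c, hc, hbound⟩ := maximum_principle_strip_general a b hδ hδlam
  refine ⟨c, hc, fun s₀ s₁ α _ hs hα hneumann hsub => hbound s₀ s₁ 0 1 α hs one_pos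
    (contDiff_infty.1 hα 2) (fun s hs' => ?_) fun s hs' => hsub s (Ioo_subset_Icc_self hs')⟩
  exact ⟨(hneumann s (Ioo_subset_Icc_self hs')).1.ge, (hneumann s (Ioo_subset_Icc_self hs')).2.le⟩
end

section
/- Let s₀ < s₁ be real numbers and let α : ℝ² → ℝ be smooth with ∂ₜα(s,0) = 0 and ∂ₜα(s,1) = 0 for all s ∈ [s₀,s₁]. Then for every ε > 0 there exist δ ∈ (0, 1/2) and a smooth function β : ℝ² → ℝ such that: (i) |α(s,t) − β(s,t)| ≤ ε and |Δ(α − β)(s,t)| ≤ ε for all (s,t) ∈ [s₀,s₁] × [0,1]; (ii) β(s,t) = α(s,0) + ∂ₜ²α(s,0)·t²/2 for all s ∈ [s₀,s₁] and t ∈ [0,δ]; and (iii) β(s,t) = α(s,1) + ∂ₜ²α(s,1)·(t−1)²/2 for all s ∈ [s₀,s₁] and t ∈ [1−δ,1]. -/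
open Set

/-- The second partial derivative `∂ₜ²α` of `α : ℝ² → ℝ` in the second variable. -/
noncomputable def pderivT2 (α : ℝ × ℝ → ℝ) (s t : ℝ) : ℝ :=
  deriv (deriv fun t' => α (s, t')) t

/-!
Taylor's formula with integral remainder writes `α(s, t) = T_c(s, t) + (t - c)³ R(s, t)` near the
line `t = c`, where `T_c` is the quadratic Taylor polynomial in `t` and `R` is smooth. Replace
`(t - c)³` by `φ(t) = η³ ψ((t - c)/η)`, where `ψ(u)` is `u³` for `|u| ≤ 1` and `0` for `|u| ≥ 2`.
Derivatives of `φ` of order at most two are `O(η)`, hence so are `φ R` and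
`Δ(φ R) = φ'' R + 2 φ' ∂ₜR + φ ΔR` on compact sets. Subtracting from `α` such a function for each of
the two boundary lines gives `β`.
-/

open Filter Function Topology
open scoped ContDiff

section PartialDerivatives

variable {𝕜 E P G : Type*} [NontriviallyNormedField 𝕜]
  [NormedAddCommGroup E] [NormedSpace 𝕜 E] [NormedAddCommGroup P] [NormedSpace 𝕜 P]
  [NormedAddCommGroup G] [NormedSpace 𝕜 G]

lemma contDiff_fderiv_fst {m n : WithTop ℕ∞} {F : E → P → G} (hF : ContDiff 𝕜 n (uncurry F))
    (hmn : m + 1 ≤ n) : ContDiff 𝕜 m fun p : E × P => fderiv 𝕜 (fun x => F x p.2) p.1 :=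
  ContDiff.fderiv (f := fun (p : E × P) x => F x p.2)
    (hF.comp (by fun_prop : ContDiff 𝕜 n fun q : (E × P) × E => (q.2, q.1.2))) contDiff_fst hmn

lemma contDiff_iteratedDeriv_snd {F : E × 𝕜 → G} (hF : ContDiff 𝕜 ∞ F) (k : ℕ) :
    ContDiff 𝕜 ∞ fun p : E × 𝕜 => iteratedDeriv k (fun t => F (p.1, t)) p.2 := by
  induction k with
  | zero => simpa using hF
  | succ k ih =>
    simp only [iteratedDeriv_succ, ← fderiv_apply_one_eq_deriv]
    exact (ContDiff.fderiv (f := fun p : E × 𝕜 => iteratedDeriv k fun t => F (p.1, t))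
      (ih.comp (by fun_prop : ContDiff 𝕜 ∞ fun q : (E × 𝕜) × 𝕜 => (q.1.1, q.2)))
      contDiff_snd (by simp)).clm_apply contDiff_const

end PartialDerivatives

section ParametricIntegral

lemma hasFDerivAt_parametric_intervalIntegral {E G : Type*}
    [NormedAddCommGroup E] [NormedSpace ℝ E] [NormedAddCommGroup G] [NormedSpace ℝ G]
    {F : E → ℝ → G} (hF : ContDiff ℝ 1 (uncurry F)) (a b : ℝ) (x₀ : E) :
    HasFDerivAt (fun x => ∫ r in a..b, F x r)
      (∫ r in a..b, fderiv ℝ (fun x => F x r) x₀) x₀ := by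
  have contF (x : E) : Continuous (F x) :=
    hF.continuous.comp (by fun_prop : Continuous fun r : ℝ => (x, r))
  have contF' : Continuous fun p : E × ℝ => fderiv ℝ (fun x => F x p.2) p.1 :=
    (contDiff_fderiv_fst (m := 0) hF (by simp)).continuous
  have contF'₀ : Continuous fun r => fderiv ℝ (fun x => F x r) x₀ :=
    contF'.comp (by fun_prop : Continuous fun r : ℝ => (x₀, r))
  obtain ⟨C, hC⟩ := (isCompact_uIcc (a := a) (b := b)).exists_bound_of_continuousOn
    contF'₀.continuousOn
  have bound_near : ∀ᶠ x in 𝓝 x₀, ∀ r ∈ uIcc a b, ‖fderiv ℝ (fun x => F x r) x‖ < C + 1 :=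
    isCompact_uIcc.eventually_forall_of_forall_eventually fun r hr =>
      contF'.norm.continuousAt.eventually_lt_const ((hC r hr).trans_lt (lt_add_one C))
  refine intervalIntegral.hasFDerivAt_integral_of_dominated_of_fderiv_le bound_near
    (.of_forall fun x => (contF x).aestronglyMeasurable) ((contF x₀).intervalIntegrable a b)
    contF'₀.aestronglyMeasurable (.of_forall fun r hr x hx => (hx r (uIoc_subset_uIcc hr)).le)
    intervalIntegrable_const (.of_forall fun r _ x _ => ?_)
  have diffF : Differentiable ℝ fun x => F x r :=
    (hF.comp (by fun_prop : ContDiff ℝ 1 fun x : E => (x, r))).differentiable one_ne_zero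
  exact (diffF x).hasFDerivAt

universe u

-- The induction on the order of differentiability replaces `G` by `E →L[ℝ] G`, so `E` and `G` live
-- in the same universe.
variable {E G : Type u} [NormedAddCommGroup E] [NormedSpace ℝ E]
  [NormedAddCommGroup G] [NormedSpace ℝ G]

lemma contDiff_parametric_intervalIntegral {n : ℕ∞} {F : E → ℝ → G}
    (hF : ContDiff ℝ n (uncurry F)) (a b : ℝ) :
    ContDiff ℝ n fun x => ∫ r in a..b, F x r := by
  refine contDiff_iff_forall_nat_le.2 fun m hm => ?_
  replace hF : ContDiff ℝ m (uncurry F) := hF.of_le (mod_cast hm)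
  clear hm
  induction m generalizing G with
  | zero =>
    exact contDiff_zero.2
      (intervalIntegral.continuous_parametric_intervalIntegral_of_continuous' hF.continuous a b)
  | succ m ih =>
    exact contDiff_succ_iff_hasFDerivAt.2 ⟨_,
      ih (F := fun x r => fderiv ℝ (fun x => F x r) x) (contDiff_fderiv_fst hF le_rfl),
      hasFDerivAt_parametric_intervalIntegral (hF.of_le (by simp)) a b⟩

lemma exists_contDiff_taylor_remainder_snd [CompleteSpace G] {F : E × ℝ → G}
    (hF : ContDiff ℝ ∞ F) (c : ℝ) (n : ℕ) :
    ∃ R : E × ℝ → G, ContDiff ℝ ∞ R ∧ ∀ x t, F (x, t) =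
      ∑ k ∈ Finset.range (n + 1),
        ((k.factorial : ℝ)⁻¹ * (t - c) ^ k) • iteratedDeriv k (fun t' => F (x, t')) c +
      (t - c) ^ (n + 1) • R (x, t) := by
  let kernel (p : E × ℝ) (r : ℝ) : G :=
    (1 - r) ^ n • iteratedDeriv (n + 1) (fun t => F (p.1, t)) (c + r * (p.2 - c))
  have kernel_contDiff : ContDiff ℝ ∞ (uncurry kernel) :=
    ContDiff.smul (by fun_prop) ((contDiff_iteratedDeriv_snd hF (n + 1)).comp
      (by fun_prop : ContDiff ℝ ∞ fun q : (E × ℝ) × ℝ => (q.1.1, c + q.2 * (q.1.2 - c))))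
  refine ⟨fun p => (n.factorial : ℝ)⁻¹ • ∫ r in (0 : ℝ)..1, kernel p r,
    (contDiff_parametric_intervalIntegral kernel_contDiff 0 1).const_smul _, fun x t => ?_⟩
  have slice_contDiff : ContDiff ℝ (n + 1) fun t' => F (x, t') :=
    (hF.comp (by fun_prop : ContDiff ℝ ∞ fun t' : ℝ => (x, t'))).of_le (mod_cast le_top)
  have taylor := map_add_eq_sum_add_integral_iteratedFDeriv (x := c) (y := t - c)
    fun r _ => slice_contDiff.contDiffAt
  simp only [add_sub_cancel, iteratedFDeriv_apply_eq_iteratedDeriv_mul_prod, Finset.prod_const,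
    Finset.card_univ, Fintype.card_fin, smul_smul] at taylor
  simp only [taylor, kernel, smul_comm _ (_ ^ (n + 1)), intervalIntegral.integral_smul,
    mul_comm _ ((t - c) ^ (n + 1)), mul_smul, smul_eq_mul]

end ParametricIntegral

section LocalizedPower

lemma iteratedDeriv_rescale {ψ : ℝ → ℝ} {k m : ℕ} (hψ : ContDiff ℝ k ψ) (hkm : k ≤ m)
    {η : ℝ} (hη : η ≠ 0) (c t : ℝ) :
    iteratedDeriv k (fun t => η ^ m * ψ (η⁻¹ * (t - c))) t =
      η ^ (m - k) * iteratedDeriv k ψ (η⁻¹ * (t - c)) := by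
  rw [iteratedDeriv_const_mul_field, iteratedDeriv_comp_sub_const k (fun u => ψ (η⁻¹ * u)) c,
    iteratedDeriv_comp_const_mul hψ, ← mul_assoc, inv_pow, pow_sub₀ _ hη hkm]

lemma exists_localized_pow (c : ℝ) (m : ℕ) {ε : ℝ} (hε : 0 < ε) :
    ∀ᶠ η in 𝓝[>] (0 : ℝ), ∃ φ : ℝ → ℝ, ContDiff ℝ ∞ φ ∧
      (∀ t, |t - c| ≤ η → φ t = (t - c) ^ m) ∧ (∀ t, 2 * η ≤ |t - c| → φ t = 0) ∧
      ∀ k < m, ∀ t, |iteratedDeriv k φ t| ≤ ε := by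
  let χ : ContDiffBump (0 : ℝ) := ⟨1, 2, one_pos, one_lt_two⟩
  let ψ (u : ℝ) : ℝ := χ u * u ^ m
  have ψ_contDiff : ContDiff ℝ ∞ ψ := χ.contDiff.mul (contDiff_id.pow m)
  have ψ_compact : HasCompactSupport ψ := χ.hasCompactSupport.mul_right
  choose C hC using fun k : ℕ => (ψ_compact.iteratedFDeriv k).exists_bound_of_continuous
    (ψ_contDiff.continuous_iteratedFDeriv (mod_cast le_top))
  have small : ∀ᶠ η in 𝓝[>] (0 : ℝ), ∀ k ∈ Finset.range m, η ^ (m - k) * C k ≤ ε := by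
    refine (Finset.eventually_all _).2 fun k hk => nhdsWithin_le_nhds ?_
    have tendsto_zero : Tendsto (fun η : ℝ => η ^ (m - k) * C k) (𝓝 0) (𝓝 (0 ^ (m - k) * C k)) :=
      Continuous.tendsto (by fun_prop) 0
    rw [zero_pow (Nat.sub_pos_of_lt (Finset.mem_range.1 hk)).ne', zero_mul] at tendsto_zero
    exact tendsto_zero.eventually_le_const hε
  filter_upwards [small, self_mem_nhdsWithin] with η hη (η_pos : 0 < η)
  refine ⟨fun t => η ^ m * ψ (η⁻¹ * (t - c)),
    contDiff_const.mul (ψ_contDiff.comp (by fun_prop)), fun t ht => ?_, fun t ht => ?_,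
    fun k hk t => ?_⟩
  · have χ_eq_one : χ (η⁻¹ * (t - c)) = 1 := χ.one_of_mem_closedBall <| by
      simpa [χ, abs_mul, abs_of_pos η_pos, inv_mul_le_iff₀ η_pos] using ht
    simp only [ψ, χ_eq_one, one_mul, ← mul_pow, mul_inv_cancel_left₀ η_pos.ne']
  · have χ_eq_zero : χ (η⁻¹ * (t - c)) = 0 := χ.zero_of_le_dist <| by
      simpa [χ, abs_mul, abs_of_pos η_pos, le_inv_mul_iff₀ η_pos, mul_comm η] using ht
    simp [ψ, χ_eq_zero]
  · rw [iteratedDeriv_rescale (ψ_contDiff.of_le (mod_cast le_top)) hk.le η_pos.ne', abs_mul,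
      abs_of_pos (pow_pos η_pos _)]
    refine le_trans ?_ (hη k (Finset.mem_range.2 hk))
    gcongr
    rw [← Real.norm_eq_abs, ← norm_iteratedFDeriv_eq_norm_iteratedDeriv]
    exact hC k _

end LocalizedPower

section Laplacian

lemma lapl_eq_iteratedDeriv (F : ℝ × ℝ → ℝ) (s t : ℝ) :
    lapl F s t =
      iteratedDeriv 2 (fun s' => F (s', t)) s + iteratedDeriv 2 (fun t' => F (s, t')) t := by
  simp only [lapl, iteratedDeriv_succ, iteratedDeriv_zero]

lemma continuous_lapl {F : ℝ × ℝ → ℝ} (hF : ContDiff ℝ ∞ F) :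
    Continuous fun p : ℝ × ℝ => lapl F p.1 p.2 := by
  simp only [lapl_eq_iteratedDeriv]
  have hFswap : ContDiff ℝ ∞ fun p : ℝ × ℝ => F (p.2, p.1) := hF.comp (by fun_prop)
  exact ((contDiff_iteratedDeriv_snd hFswap 2).continuous.comp continuous_swap).add
    (contDiff_iteratedDeriv_snd hF 2).continuous

lemma continuous_pderivT {F : ℝ × ℝ → ℝ} (hF : ContDiff ℝ ∞ F) :
    Continuous fun p : ℝ × ℝ => pderivT F p.1 p.2 := by
  simpa only [pderivT, iteratedDeriv_one] using (contDiff_iteratedDeriv_snd hF 1).continuous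

lemma exists_bound_pderivT_lapl {F : ℝ × ℝ → ℝ} (hF : ContDiff ℝ ∞ F) {K : Set (ℝ × ℝ)}
    (hK : IsCompact K) :
    ∃ C > 0, ∀ s t, (s, t) ∈ K → |F (s, t)| ≤ C ∧ |pderivT F s t| ≤ C ∧ |lapl F s t| ≤ C := by
  have cont : Continuous fun p : ℝ × ℝ => (F p, pderivT F p.1 p.2, lapl F p.1 p.2) :=
    hF.continuous.prodMk ((continuous_pderivT hF).prodMk (continuous_lapl hF))
  obtain ⟨C, hC⟩ := hK.exists_bound_of_continuousOn cont.continuousOn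
  simp only [norm_prod_le_iff, Real.norm_eq_abs] at hC
  exact ⟨max C 1, by positivity, fun s t hst => by simp [hC (s, t) hst]⟩

lemma lapl_add {F G : ℝ × ℝ → ℝ} (hF : ContDiff ℝ 2 F) (hG : ContDiff ℝ 2 G) (s t : ℝ) :
    lapl (fun p => F p + G p) s t = lapl F s t + lapl G s t := by
  simp only [lapl_eq_iteratedDeriv]
  rw [iteratedDeriv_fun_add, iteratedDeriv_fun_add]
  · ring
  all_goals exact ContDiff.contDiffAt (ContDiff.comp ‹_› (by fun_prop))

lemma lapl_snd_mul {φ : ℝ → ℝ} {G : ℝ × ℝ → ℝ} (hφ : ContDiff ℝ 2 φ) (hG : ContDiff ℝ 2 G)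
    (s t : ℝ) :
    lapl (fun p => φ p.2 * G p) s t =
      iteratedDeriv 2 φ t * G (s, t) + 2 * (deriv φ t * pderivT G s t) + φ t * lapl G s t := by
  have hGt : ContDiff ℝ 2 fun t' => G (s, t') := hG.comp (by fun_prop)
  simp only [lapl_eq_iteratedDeriv, pderivT]
  rw [iteratedDeriv_const_mul_field, iteratedDeriv_fun_mul hφ.contDiffAt hGt.contDiffAt]
  simp only [Finset.sum_range_succ, Finset.range_one, Finset.sum_singleton, Nat.reduceAdd,
    Nat.choose_zero_right, Nat.choose_succ_self_right, Nat.choose_self, Nat.cast_one,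
    Nat.cast_ofNat, Nat.add_one_sub_one, tsub_zero, tsub_self, iteratedDeriv_zero,
    iteratedDeriv_one]
  ring

lemma abs_lapl_snd_mul_le {φ : ℝ → ℝ} {G : ℝ × ℝ → ℝ} (hφ : ContDiff ℝ 2 φ)
    (hG : ContDiff ℝ 2 G) {s t A C : ℝ} (φ_le : ∀ k < 3, |iteratedDeriv k φ t| ≤ A)
    (G_le : |G (s, t)| ≤ C) (pderivT_le : |pderivT G s t| ≤ C) (lapl_le : |lapl G s t| ≤ C) :
    |lapl (fun p => φ p.2 * G p) s t| ≤ 4 * (A * C) := by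
  have φ₀_le : |φ t| ≤ A := by simpa using φ_le 0
  have φ₁_le : |deriv φ t| ≤ A := by simpa using φ_le 1
  have A_nonneg : 0 ≤ A := (abs_nonneg _).trans φ₀_le
  rw [lapl_snd_mul hφ hG]
  calc |iteratedDeriv 2 φ t * G (s, t) + 2 * (deriv φ t * pderivT G s t) + φ t * lapl G s t|
    _ ≤ |iteratedDeriv 2 φ t| * |G (s, t)| + 2 * (|deriv φ t| * |pderivT G s t|) +
          |φ t| * |lapl G s t| := by
        simpa [abs_mul] using abs_add_three (iteratedDeriv 2 φ t * G (s, t))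
          (2 * (deriv φ t * pderivT G s t)) (φ t * lapl G s t)
    _ ≤ A * C + 2 * (A * C) + A * C := by gcongr; exact φ_le 2 (by simp)
    _ = 4 * (A * C) := by ring

end Laplacian

/-- The second-order Taylor polynomial of `α(s, ·)` at `c`, evaluated at `t`. Its first-order term
vanishes under the Neumann condition `∂ₜα(s, c) = 0`. -/
noncomputable def quadTaylorT (α : ℝ × ℝ → ℝ) (c s t : ℝ) : ℝ :=
  α (s, c) + pderivT α s c * (t - c) + pderivT2 α s c * (t - c) ^ 2 / 2

lemma exists_contDiff_eq_quadTaylorT_add {α : ℝ × ℝ → ℝ} (hα : ContDiff ℝ ∞ α) (c : ℝ) :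
    ∃ R : ℝ × ℝ → ℝ, ContDiff ℝ ∞ R ∧
      ∀ s t, α (s, t) = quadTaylorT α c s t + (t - c) ^ 3 * R (s, t) := by
  obtain ⟨R, R_contDiff, hR⟩ := exists_contDiff_taylor_remainder_snd hα c 2
  refine ⟨R, R_contDiff, fun s t => ?_⟩
  rw [hR]
  simp only [Finset.sum_range_succ, Finset.range_one, Finset.sum_singleton, Nat.reduceAdd,
    Nat.factorial_zero, Nat.factorial_one, Nat.factorial_two, Nat.cast_one, Nat.cast_ofNat,
    iteratedDeriv_succ, iteratedDeriv_zero, smul_eq_mul, quadTaylorT, pderivT, pderivT2]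
  ring

lemma exists_localized_quadTaylorT_remainder {α : ℝ × ℝ → ℝ} (hα : ContDiff ℝ ∞ α)
    {K : Set (ℝ × ℝ)} (hK : IsCompact K) (c : ℝ) {ε : ℝ} (hε : 0 < ε) :
    ∀ᶠ η in 𝓝[>] (0 : ℝ), ∃ ρ : ℝ × ℝ → ℝ, ContDiff ℝ ∞ ρ ∧
      (∀ s t, (s, t) ∈ K → |ρ (s, t)| ≤ ε ∧ |lapl ρ s t| ≤ ε) ∧
      (∀ s t, |t - c| ≤ η → ρ (s, t) = α (s, t) - quadTaylorT α c s t) ∧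
      ∀ s t, 2 * η ≤ |t - c| → ρ (s, t) = 0 := by
  obtain ⟨R, R_contDiff, hR⟩ := exists_contDiff_eq_quadTaylorT_add hα c
  obtain ⟨C, C_pos, hC⟩ := exists_bound_pderivT_lapl R_contDiff hK
  filter_upwards [exists_localized_pow c 3 (ε := ε / (4 * C)) (by positivity)] with
    η ⟨φ, φ_contDiff, φ_near, φ_far, φ_small⟩
  refine ⟨fun p => φ p.2 * R p, (φ_contDiff.comp contDiff_snd).mul R_contDiff,
    fun s t hst => ⟨?_, ?_⟩, fun s t ht => ?_, fun s t ht => by simp [φ_far t ht]⟩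
  · have φ_le : |φ t| ≤ ε / (4 * C) := by simpa using φ_small 0 (by simp) t
    calc |φ t * R (s, t)| ≤ ε / (4 * C) * C := by
          rw [abs_mul]; gcongr; exact (hC s t hst).1
      _ = ε / 4 := by field_simp
      _ ≤ ε := by linarith
  · obtain ⟨R_le, pderivT_le, lapl_le⟩ := hC s t hst
    calc |lapl (fun p => φ p.2 * R p) s t| ≤ 4 * (ε / (4 * C) * C) :=
          abs_lapl_snd_mul_le (φ_contDiff.of_le ENat.LEInfty.out)
            (R_contDiff.of_le ENat.LEInfty.out) (fun k hk => φ_small k hk t)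
            R_le pderivT_le lapl_le
      _ = ε := by field_simp
  · simp only [φ_near t ht, hR s t, add_sub_cancel_left]

theorem neumann_taylor_approximation_general {α : ℝ × ℝ → ℝ} (hα : ContDiff ℝ ∞ α)
    {K : Set (ℝ × ℝ)} (hK : IsCompact K) {a b : ℝ} (hab : a < b) {ε : ℝ} (hε : 0 < ε) :
    ∃ δ : ℝ, 0 < δ ∧ δ < (b - a) / 2 ∧ ∃ β : ℝ × ℝ → ℝ, ContDiff ℝ ∞ β ∧
      (∀ s t, (s, t) ∈ K →
        |α (s, t) - β (s, t)| ≤ ε ∧ |lapl (fun p => α p - β p) s t| ≤ ε) ∧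
      (∀ s t, |t - a| ≤ δ → β (s, t) = quadTaylorT α a s t) ∧
      ∀ s t, |t - b| ≤ δ → β (s, t) = quadTaylorT α b s t := by
  have δ_range : ∀ᶠ δ in 𝓝[>] (0 : ℝ), δ ∈ Ioo 0 ((b - a) / 3) :=
    Ioo_mem_nhdsGT (by linarith)
  obtain ⟨δ, ⟨δ_pos, δ_lt⟩, ⟨ρ, ρ_contDiff, ρ_small, ρ_near, ρ_far⟩,
      ⟨σ, σ_contDiff, σ_small, σ_near, σ_far⟩⟩ :=
    (δ_range.and ((exists_localized_quadTaylorT_remainder hα hK a (half_pos hε)).and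
      (exists_localized_quadTaylorT_remainder hα hK b (half_pos hε)))).exists
  refine ⟨δ, δ_pos, by linarith, fun p => α p - (ρ p + σ p), hα.sub (ρ_contDiff.add σ_contDiff),
    fun s t hst => ?_, fun s t ht => ?_, fun s t ht => ?_⟩
  · obtain ⟨ρ_le, lapl_ρ_le⟩ := ρ_small s t hst
    obtain ⟨σ_le, lapl_σ_le⟩ := σ_small s t hst
    simp only [sub_sub_cancel]
    rw [lapl_add (ρ_contDiff.of_le ENat.LEInfty.out) (σ_contDiff.of_le ENat.LEInfty.out)]
    exact ⟨(abs_add_le _ _).trans (by linarith), (abs_add_le _ _).trans (by linarith)⟩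
  · have far_b : 2 * δ ≤ |t - b| := by grind
    simp [ρ_near s t ht, σ_far s t far_b]
  · have far_a : 2 * δ ≤ |t - a| := by grind
    simp [ρ_far s t far_a, σ_near s t ht]

/-- **Approximation step in the proof of Lemma 3.5.**
A smooth function on a strip satisfying Neumann boundary conditions at `t = 0` and `t = 1`
can be approximated, with control on the Laplacian, by a smooth function which near each
horizontal boundary coincides with its second-order Taylor polynomial in `t`. -/
theorem neumann_taylor_approximation
    (s₀ s₁ : ℝ) (hs : s₀ < s₁) (α : ℝ × ℝ → ℝ) (hα : ContDiff ℝ (⊤ : ℕ∞) α)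
    (hneu : ∀ s ∈ Icc s₀ s₁, pderivT α s 0 = 0 ∧ pderivT α s 1 = 0)
    (ε : ℝ) (hε : 0 < ε) :
    ∃ δ : ℝ, 0 < δ ∧ δ < 1 / 2 ∧ ∃ β : ℝ × ℝ → ℝ, ContDiff ℝ (⊤ : ℕ∞) β ∧
      (∀ s ∈ Icc s₀ s₁, ∀ t ∈ Icc (0:ℝ) 1,
        |α (s, t) - β (s, t)| ≤ ε ∧ |lapl (fun x => α x - β x) s t| ≤ ε) ∧
      (∀ s ∈ Icc s₀ s₁, ∀ t ∈ Icc (0:ℝ) δ,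
        β (s, t) = α (s, 0) + pderivT2 α s 0 * t ^ 2 / 2) ∧
      (∀ s ∈ Icc s₀ s₁, ∀ t ∈ Icc (1 - δ) 1,
        β (s, t) = α (s, 1) + pderivT2 α s 1 * (t - 1) ^ 2 / 2) := by
  obtain ⟨δ, δ_pos, δ_lt, β, β_contDiff, β_close, β_zero, β_one⟩ :=
    neumann_taylor_approximation_general hα (isCompact_Icc.prod isCompact_Icc) zero_lt_one hε
  exact ⟨δ, δ_pos, by simpa using δ_lt, β, β_contDiff, fun s hs t ht => β_close s t ⟨hs, ht⟩,
    fun s hs t ht => by simp [β_zero s t (by grind), quadTaylorT, (hneu s hs).1],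
    fun s hs t ht => by simp [β_one s t (by grind), quadTaylorT, (hneu s hs).2]⟩
end
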